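/- Let β_L, β_R > 0, v ∈ (−1,1) with v ≠ 0, γ := 1/√(1 − v²), d₊ := γ(1 + v), d₋ := γ(1 − v), and define w̃_{N,v}(s) := (1/(4πγv))·[(1/β_R)·(f_{β_R/γ}(s) − f_{β_R d₋}(s)) − (1/β_L)·(f_{β_L/γ}(s) − f_{β_L d₊}(s))]. Then for every E ∈ ℝ with E ≠ 0: ∫_ℝ e^{−i E s}·w̃_{N,v}(s) ds − (E/(2π))·Θ(−E) = R(β_L, −v, E) + R(β_R, v, E), where R(β, u, E) := (√(1 − u²)/(4π u β))·ln((1 − e^{−β√(1 − u²)·E})/(1 − e^{−β√((1 − u)/(1 + u))·E})). -/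

import Mathlib

open MeasureTheory Real

/-- The function `f_c(s) := −(c/π)·Σ_{n=1}^∞ 1/(n²c² + s²)`. -/
noncomputable def fFun (c s : ℝ) : ℝ :=
  -(c / π) * ∑' n : ℕ, 1 / (((n : ℝ) + 1) ^ 2 * c ^ 2 + s ^ 2)

/-- The function `R(β, u, E)` appearing in the NESS transition rate. -/
noncomputable def Rfun (β u E : ℝ) : ℝ :=
  (Real.sqrt (1 - u ^ 2) / (4 * π * u * β)) *
    Real.log ((1 - Real.exp (-(β * Real.sqrt (1 - u ^ 2) * E))) /
      (1 - Real.exp (-(β * Real.sqrt ((1 - u) / (1 + u)) * E))))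


lemma aux_integrable (a s : ℝ) (ha : 0 < a) :
    Integrable (fun x : ℝ => Complex.exp (-(Complex.I * s * x)) * ((Real.exp (-(a * |x|)) : ℝ) : ℂ)) := by
  have h1 : Integrable (fun x : ℝ => Real.exp (-(a * |x|))) := by
    rw [← integrableOn_univ, ← Set.Iic_union_Ioi (a := (0:ℝ)), integrableOn_union]
    constructor
    · refine (integrableOn_exp_mul_Iic ha 0).congr_fun (fun x hx => ?_) measurableSet_Iic
      simp only [Set.mem_Iic] at hx
      simp [abs_of_nonpos hx]
    · refine (integrableOn_exp_mul_Ioi (a := -a) (by linarith) 0).congr_fun (fun x hx => ?_) measurableSet_Ioi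
      simp only [Set.mem_Ioi] at hx
      simp [abs_of_pos hx]
  refine h1.mono' (by fun_prop) (Filter.Eventually.of_forall fun x => ?_)
  rw [norm_mul, Complex.norm_exp, Complex.norm_real, Real.norm_of_nonneg (Real.exp_pos _).le]
  simp

lemma aux_integral (a s : ℝ) (ha : 0 < a) :
    ∫ x : ℝ, Complex.exp (-(Complex.I * s * x)) * ((Real.exp (-(a * |x|)) : ℝ) : ℂ)
      = ((2 * a / (a ^ 2 + s ^ 2) : ℝ) : ℂ) := by
  have hi := aux_integrable a s ha
  rw [← intervalIntegral.integral_Iic_add_Ioi (b := 0) hi.integrableOn hi.integrableOn]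
  have e1 : ∫ x in Set.Iic (0:ℝ), Complex.exp (-(Complex.I * s * x)) * ((Real.exp (-(a * |x|)) : ℝ) : ℂ)
      = ∫ x in Set.Iic (0:ℝ), Complex.exp ((a - Complex.I * s) * x) := by
    refine setIntegral_congr_fun measurableSet_Iic fun x hx => ?_
    simp only [Set.mem_Iic] at hx
    simp only [abs_of_nonpos hx]
    push_cast
    rw [← Complex.exp_add]; congr 1; ring
  have e2 : ∫ x in Set.Ioi (0:ℝ), Complex.exp (-(Complex.I * s * x)) * ((Real.exp (-(a * |x|)) : ℝ) : ℂ)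
      = ∫ x in Set.Ioi (0:ℝ), Complex.exp ((-a - Complex.I * s) * x) := by
    refine setIntegral_congr_fun measurableSet_Ioi fun x hx => ?_
    simp only [Set.mem_Ioi] at hx
    simp only [abs_of_pos hx]
    push_cast
    rw [← Complex.exp_add]; congr 1; ring
  rw [e1, e2, integral_exp_mul_complex_Iic (by simpa using ha), integral_exp_mul_complex_Ioi (by simpa using ha)]
  have n1 : (a - Complex.I * s : ℂ) ≠ 0 := fun h => by
    have := congrArg Complex.re h; simp at this; exact ha.ne' this
  have n2 : (-a - Complex.I * s : ℂ) ≠ 0 := fun h => by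
    have := congrArg Complex.re h; simp at this; exact ha.ne' this
  have n3 : ((a:ℂ) ^ 2 + (s:ℂ) ^ 2) ≠ 0 := by
    have : a ^ 2 + s ^ 2 ≠ 0 := by positivity
    exact_mod_cast this
  push_cast
  simp only [mul_zero, Complex.exp_zero]
  field_simp
  ring_nf
  simp only [Complex.I_sq]
  ring

lemma aux_summable (c : ℝ) (hc : 0 < c) (s : ℝ) :
    Summable fun n : ℕ => 1 / (((n : ℝ) + 1) ^ 2 * c ^ 2 + s ^ 2) := by
  have h : Summable fun n : ℕ => 1 / ((n : ℝ) + 1) ^ 2 := by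
    have := (summable_nat_add_iff 1).2 (Real.summable_one_div_nat_pow.2 (one_lt_two))
    simpa using this
  refine Summable.of_nonneg_of_le (fun n => by positivity) (fun n => ?_) (h.mul_left (1 / c ^ 2))
  rw [one_div_mul_one_div]
  apply one_div_le_one_div_of_le (by positivity)
  nlinarith [sq_nonneg s]

lemma fFun_zero_neg (c : ℝ) (hc : 0 < c) : fFun c 0 < 0 := by
  unfold fFun
  have : 0 < ∑' n : ℕ, 1 / (((n : ℝ) + 1) ^ 2 * c ^ 2 + (0:ℝ) ^ 2) :=
    (aux_summable c hc 0).tsum_pos (fun n => by positivity) 0 (by positivity)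
  have : 0 < (c / π) * ∑' n : ℕ, 1 / (((n : ℝ) + 1) ^ 2 * c ^ 2 + (0:ℝ) ^ 2) := by positivity
  linarith

lemma fFun_nonpos (c : ℝ) (hc : 0 < c) (s : ℝ) : fFun c s ≤ 0 := by
  unfold fFun
  have : 0 ≤ ∑' n : ℕ, 1 / (((n : ℝ) + 1) ^ 2 * c ^ 2 + s ^ 2) :=
    tsum_nonneg (fun n => by positivity)
  have : 0 ≤ (c / π) * ∑' n : ℕ, 1 / (((n : ℝ) + 1) ^ 2 * c ^ 2 + s ^ 2) := by positivity
  linarith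

lemma fFun_ge (c : ℝ) (hc : 0 < c) (s : ℝ) : fFun c 0 ≤ fFun c s := by
  unfold fFun
  rw [neg_mul, neg_mul, neg_le_neg_iff]
  refine mul_le_mul_of_nonneg_left ?_ (by positivity)
  refine (aux_summable c hc s).tsum_le_tsum (fun n => ?_) (aux_summable c hc 0)
  apply one_div_le_one_div_of_le (by positivity)
  nlinarith [sq_nonneg s]

lemma fFun_continuous (c : ℝ) (hc : 0 < c) : Continuous (fFun c) := by
  unfold fFun
  refine continuous_const.mul (continuous_tsum (fun n => ?_) (aux_summable c hc 0) fun n s => ?_)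
  · refine continuous_const.div (by fun_prop) fun s => ?_
    positivity
  · rw [Real.norm_of_nonneg (by positivity)]
    apply one_div_le_one_div_of_le (by positivity)
    nlinarith [sq_nonneg s]

lemma aux_step (c t : ℝ) (hc : 0 < c) (ht : 0 < t) (n : ℕ) :
    c * (1 / (((n : ℝ) + 1) ^ 2 * c ^ 2 + t ^ 2)) ≤
      arctan (((n + 1 : ℕ) : ℝ) * c / t) / t - arctan ((n : ℝ) * c / t) / t ∧
    arctan (((n + 1 : ℕ) : ℝ) * c / t) / t - arctan ((n : ℝ) * c / t) / t ≤
      c * (1 / ((n : ℝ) ^ 2 * c ^ 2 + t ^ 2)) := by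
  have hlt : (n : ℝ) * c < ((n + 1 : ℕ) : ℝ) * c := by push_cast; nlinarith
  have hd : ∀ x : ℝ, HasDerivAt (fun x => arctan (x / t) / t) (1 / (x ^ 2 + t ^ 2)) x := by
    intro x
    have := (((hasDerivAt_id x).div_const t).arctan).div_const t
    have e : 1 / (x ^ 2 + t ^ 2) = 1 / (1 + (id x / t) ^ 2) * (1 / t) / t := by
      simp only [id]
      field_simp
      ring
    rw [e]
    exact this
  obtain ⟨y, hy, hy2⟩ := exists_hasDerivAt_eq_slope (fun x => arctan (x / t) / t) _ hlt
    (fun x _ => (hd x).continuousAt.continuousWithinAt) (fun x _ => hd x)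
  have hcc : ((n + 1 : ℕ) : ℝ) * c - n * c = c := by push_cast; ring
  rw [hcc, eq_div_iff hc.ne'] at hy2
  rw [← hy2, mul_comm]
  have hn : 0 ≤ (n:ℝ) * c := by positivity
  have h1 := hy.1
  have h2 := hy.2
  push_cast at h2
  constructor
  · refine mul_le_mul_of_nonneg_right ?_ hc.le
    apply one_div_le_one_div_of_le (by positivity)
    rw [← mul_pow]; gcongr; linarith
  · rw [mul_comm c]
    refine mul_le_mul_of_nonneg_right ?_ hc.le
    apply one_div_le_one_div_of_le (by positivity)
    rw [← mul_pow]; gcongr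

lemma fFun_bound (c s : ℝ) (hc : 0 < c) (hs : s ≠ 0) :
    -(1 / (2 * |s|)) ≤ fFun c s ∧ fFun c s ≤ -(1 / (2 * |s|)) + c / (π * s ^ 2) := by
  have ht : 0 < |s| := abs_pos.2 hs
  have hss : s ^ 2 = |s| ^ 2 := (sq_abs s).symm
  have hsum := aux_summable c hc |s|
  unfold fFun
  rw [hss]
  generalize |s| = t at *
  set S := ∑' n : ℕ, 1 / (((n : ℝ) + 1) ^ 2 * c ^ 2 + t ^ 2) with hS
  have hlim : Filter.Tendsto (fun n : ℕ => arctan ((n : ℝ) * c / t) / t) Filter.atTop (nhds (π / 2 / t)) := by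
    refine Filter.Tendsto.div_const ?_ t
    refine (tendsto_nhds_of_tendsto_nhdsWithin tendsto_arctan_atTop).comp ?_
    exact (tendsto_natCast_atTop_atTop.atTop_mul_const hc).atTop_div_const ht
  have hT : HasSum (fun n : ℕ => arctan (((n + 1 : ℕ) : ℝ) * c / t) / t - arctan ((n : ℝ) * c / t) / t)
      (π / 2 / t) := by
    rw [hasSum_iff_tendsto_nat_of_nonneg]
    · simp_rw [Finset.sum_range_sub (fun n : ℕ => arctan ((n : ℝ) * c / t) / t)]
      simpa using hlim
    · intro n
      exact le_trans (by positivity) (aux_step c t hc ht n).1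
  have hu : c * S ≤ π / 2 / t :=
    hasSum_le (fun n => (aux_step c t hc ht n).1) (hsum.hasSum.mul_left c) hT
  have hl : π / 2 / t ≤ c * (S + 1 / t ^ 2) := by
    refine hasSum_le (fun n => (aux_step c t hc ht n).2) hT (HasSum.mul_left c ?_)
    have := (hasSum_nat_add_iff (f := fun n : ℕ => 1 / ((n : ℝ) ^ 2 * c ^ 2 + t ^ 2)) 1 (g := S)).1
      (by simpa [hS] using hsum.hasSum)
    simpa using this
  have e1 : -(c / π) * S = -(c * S) / π := by ring
  rw [e1]
  constructor
  · have : -(1 / (2 * t)) = -(π / 2 / t) / π := by field_simp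
    rw [this]; gcongr
  · have : -(1 / (2 * t)) + c / (π * t ^ 2) = (-(π / 2 / t) + c * (1 / t ^ 2)) / π := by field_simp
    rw [this]; gcongr; linarith

lemma fdiff_integrable (c d : ℝ) (hc : 0 < c) (hd : 0 < d) :
    Integrable (fun s => fFun c s - fFun d s) := by
  set K := -fFun c 0 - fFun d 0 + (c / π + d / π) with hK
  have hi : Integrable (fun s : ℝ => K * (1 + s ^ 2)⁻¹) := integrable_inv_one_add_sq.const_mul K
  refine hi.mono' ((fFun_continuous c hc).sub (fFun_continuous d hd)).aestronglyMeasurable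
    (Filter.Eventually.of_forall fun s => ?_)
  rw [← div_eq_mul_inv, le_div_iff₀ (by positivity), Real.norm_eq_abs, mul_add, mul_one, hK]
  have a1 := fFun_ge c hc s
  have a2 := fFun_ge d hd s
  have a3 := fFun_nonpos c hc s
  have a4 := fFun_nonpos d hd s
  refine add_le_add ?_ ?_
  · rw [abs_le]; constructor <;> linarith
  · by_cases hs : s = 0
    · subst hs; simp; positivity
    · have b1 := fFun_bound c s hc hs
      have b2 := fFun_bound d s hd hs
      have hs2 : 0 < s ^ 2 := by positivity
      have p1 : 0 < c / (π * s ^ 2) := by positivity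
      have p2 : 0 < d / (π * s ^ 2) := by positivity
      have : |fFun c s - fFun d s| ≤ c / (π * s ^ 2) + d / (π * s ^ 2) := by
        rw [abs_le]; constructor <;> linarith
      calc _ ≤ (c / (π * s ^ 2) + d / (π * s ^ 2)) * s ^ 2 := by gcongr
        _ = _ := by field_simp

/-- the log function -/
noncomputable def Lf (c x : ℝ) : ℝ := Real.log (1 - Real.exp (-(c * |x|)))

lemma Lf_fourier (c s : ℝ) (hc : 0 < c) :
    ∫ x : ℝ, Complex.exp (-(Complex.I * s * x)) * (Lf c x : ℂ) = ((2 * π * fFun c s : ℝ) : ℂ) := by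
  set F : ℕ → ℝ → ℂ := fun n x => (((-(1 / ((n:ℝ) + 1)) : ℝ)) : ℂ) *
    (Complex.exp (-(Complex.I * s * x)) * ((Real.exp (-((((n:ℝ) + 1) * c) * |x|)) : ℝ) : ℂ)) with hF
  have hpos : ∀ n : ℕ, 0 < ((n:ℝ) + 1) * c := fun n => by positivity
  have hint : ∀ n, Integrable (F n) := fun n => (aux_integrable _ s (hpos n)).const_mul _
  have hnorm : ∀ n, ∫ x, ‖F n x‖ = (2 * c) * (1 / (((n:ℝ) + 1) ^ 2 * c ^ 2 + (0:ℝ) ^ 2)) := by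
    intro n
    have h0 := aux_integral _ 0 (hpos n)
    simp only [Complex.ofReal_zero, mul_zero, zero_mul, neg_zero, Complex.exp_zero, one_mul] at h0
    rw [integral_complex_ofReal] at h0
    have h0' := Complex.ofReal_injective h0
    have : ∀ x, ‖F n x‖ = (1 / ((n:ℝ) + 1)) * Real.exp (-((((n:ℝ) + 1) * c) * |x|)) := by
      intro x
      simp only [hF]
      rw [norm_mul, norm_mul, Complex.norm_exp, Complex.norm_real, Complex.norm_real,
        Real.norm_of_nonneg (Real.exp_pos _).le, norm_neg, Real.norm_of_nonneg (by positivity)]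
      simp
    simp_rw [this]
    rw [integral_const_mul, h0']
    field_simp
  have hs : HasSum (fun n => ∫ x, F n x) (∫ x, ∑' n, F n x) := by
    refine hasSum_integral_of_summable_integral_norm hint ?_
    simp_rw [hnorm]
    exact (aux_summable c hc 0).mul_left _
  have hts : ∫ x, ∑' n, F n x = ∫ x : ℝ, Complex.exp (-(Complex.I * s * x)) * (Lf c x : ℂ) := by
    refine integral_congr_ae ?_
    have : ∀ᵐ x : ℝ, x ≠ 0 := by simp [ae_iff]
    filter_upwards [this] with x hx
    have hx' : 0 < |x| := abs_pos.2 hx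
    have hlt : |Real.exp (-(c * |x|))| < 1 := by
      rw [abs_of_pos (Real.exp_pos _), Real.exp_lt_one_iff]
      have := mul_pos hc hx'
      linarith
    have h := (hasSum_pow_div_log_of_abs_lt_one hlt).neg
    rw [neg_neg] at h
    have h2 := (Complex.hasSum_ofReal.2 h).mul_left (Complex.exp (-(Complex.I * s * x)))
    rw [← Lf] at h2
    rw [← h2.tsum_eq]
    refine tsum_congr fun n => ?_
    simp only [hF]
    rw [← Real.exp_nat_mul]
    have : ((n + 1 : ℕ) : ℝ) * -(c * |x|) = -((((n:ℝ) + 1) * c) * |x|) := by push_cast; ring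
    rw [this]
    push_cast
    ring
  rw [← hts, ← hs.tsum_eq]
  have : ∀ n, ∫ x, F n x = ((2 * π * (-(c / π) * (1 / (((n:ℝ) + 1) ^ 2 * c ^ 2 + s ^ 2))) : ℝ) : ℂ) := by
    intro n
    simp only [hF]
    rw [integral_const_mul, aux_integral _ s (hpos n), ← Complex.ofReal_mul]
    congr 1
    field_simp
  simp_rw [this]
  rw [← Complex.ofReal_tsum, tsum_mul_left, tsum_mul_left, fFun]

lemma Lf_integrable (c : ℝ) (hc : 0 < c) : Integrable (fun x => (Lf c x : ℂ)) := by
  by_contra h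
  have h1 := Lf_fourier c 0 hc
  simp only [Complex.ofReal_zero, mul_zero, zero_mul, neg_zero, Complex.exp_zero, one_mul] at h1
  rw [integral_undef h] at h1
  have h2 : 2 * π * fFun c 0 = 0 := by exact_mod_cast h1.symm
  have := fFun_zero_neg c hc
  have hp := Real.pi_pos
  nlinarith [mul_pos hp (neg_pos.2 this)]

lemma Lf_continuousAt (c x : ℝ) (hc : 0 < c) (hx : x ≠ 0) : ContinuousAt (Lf c) x := by
  unfold Lf
  refine ContinuousAt.log (by fun_prop) ?_
  have : Real.exp (-(c * |x|)) < 1 := by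
    rw [Real.exp_lt_one_iff]
    have := mul_pos hc (abs_pos.2 hx)
    linarith
  linarith

open FourierTransform in
lemma key (c d E : ℝ) (hc : 0 < c) (hd : 0 < d) (hE : E ≠ 0) :
    ∫ s : ℝ, Complex.exp (-(Complex.I * E * s)) * ((fFun c s - fFun d s : ℝ) : ℂ)
      = ((Lf c E - Lf d E : ℝ) : ℂ) := by
  set h : ℝ → ℂ := fun x => (Lf c x : ℂ) - (Lf d x : ℂ) with hh
  have hint : Integrable h := (Lf_integrable c hc).sub (Lf_integrable d hd)
  have hexp : ∀ (e s : ℝ), 0 < e → Integrable (fun x : ℝ => Complex.exp (-(Complex.I * s * x)) * (Lf e x : ℂ)) := by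
    intro e s he
    refine (Lf_integrable e he).norm.mono'
      ((by fun_prop : AEStronglyMeasurable (fun x : ℝ => Complex.exp (-(Complex.I * s * x))) _).mul
        (Lf_integrable e he).aestronglyMeasurable) (Filter.Eventually.of_forall fun x => ?_)
    rw [norm_mul, Complex.norm_exp]
    simp
  have hF : 𝓕 h = fun w => ((2 * π * (fFun c (2 * π * w) - fFun d (2 * π * w)) : ℝ) : ℂ) := by
    funext w
    rw [Real.fourier_real_eq_integral_exp_smul]
    have h1 := Lf_fourier c (2 * π * w) hc
    have h2 := Lf_fourier d (2 * π * w) hd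
    rw [mul_sub, Complex.ofReal_sub, ← h1, ← h2, ← integral_sub (hexp c _ hc) (hexp d _ hd)]
    congr 1
    funext x
    simp only [hh, smul_eq_mul, mul_sub]
    have : Complex.exp (((-2 * π * x * w : ℝ) : ℂ) * Complex.I)
      = Complex.exp (-(Complex.I * ((2 * π * w : ℝ) : ℂ) * x)) := by
      congr 1; push_cast; ring
    rw [this]
  have hFint : Integrable (𝓕 h) := by
    rw [hF]
    exact ((((fdiff_integrable c d hc hd).comp_mul_left' (by positivity : (2 * π) ≠ 0)).const_mul
      (2 * π))).ofReal
  have hcont : ContinuousAt h (-E) := by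
    have hE' : -E ≠ 0 := neg_ne_zero.2 hE
    exact (Complex.continuous_ofReal.continuousAt.comp (Lf_continuousAt c _ hc hE')).sub
      (Complex.continuous_ofReal.continuousAt.comp (Lf_continuousAt d _ hd hE'))
  have hinv := hint.fourierInv_fourier_eq hFint hcont
  have hval : h (-E) = ((Lf c E - Lf d E : ℝ) : ℂ) := by
    simp [hh, Lf]
  rw [← hval, ← hinv, hF, Real.fourierInv_eq']
  set g : ℝ → ℂ := fun s => Complex.exp (-(Complex.I * E * s)) * ((fFun c s - fFun d s : ℝ) : ℂ) with hg
  have hsc := Measure.integral_comp_mul_left g (2 * π)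
  have : ∀ w : ℝ, Complex.exp (((2 * π * inner ℝ w (-E) : ℝ) : ℂ) * Complex.I) •
      (((2 * π * (fFun c (2 * π * w) - fFun d (2 * π * w)) : ℝ) : ℂ)) = (2 * π : ℂ) * g (2 * π * w) := by
    intro w
    simp only [hg, smul_eq_mul]
    have : Complex.exp (((2 * π * inner ℝ w (-E) : ℝ) : ℂ) * Complex.I)
      = Complex.exp (-(Complex.I * E * ((2 * π * w : ℝ) : ℂ))) := by
      congr 1; simp; ring
    rw [this]
    push_cast
    ring
  simp_rw [this]
  rw [integral_const_mul, hsc, abs_of_pos (by positivity), Complex.real_smul]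
  push_cast
  have := Real.pi_ne_zero
  have : (π : ℂ) ≠ 0 := by exact_mod_cast this
  field_simp

lemma log_quot (a b E : ℝ) (ha : 0 < a) (hb : 0 < b) (hE : E ≠ 0) :
    Real.log ((1 - Real.exp (-(a * E))) / (1 - Real.exp (-(b * E))))
      = Lf a E - Lf b E - (a - b) * (E * if E < 0 then 1 else 0) := by
  have hlt : ∀ e : ℝ, 0 < e → 1 - Real.exp (-(e * |E|)) ≠ 0 := fun e he => by
    have : Real.exp (-(e * |E|)) < 1 := by
      rw [Real.exp_lt_one_iff]
      have := mul_pos he (abs_pos.2 hE)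
      linarith
    linarith
  have k1 := hlt a ha
  have k2 := hlt b hb
  unfold Lf
  split_ifs with h
  · rw [abs_of_neg h] at *
    have e : ∀ e : ℝ, 1 - Real.exp (-(e * E)) = -(Real.exp (-(e * E)) * (1 - Real.exp (-(e * -E)))) := by
      intro e
      rw [mul_sub, ← Real.exp_add]; simp
    rw [e a, e b, neg_div_neg_eq, Real.log_div (mul_ne_zero (Real.exp_ne_zero _) k1) (mul_ne_zero (Real.exp_ne_zero _) k2),
      Real.log_mul (Real.exp_ne_zero _) k1, Real.log_mul (Real.exp_ne_zero _) k2, Real.log_exp, Real.log_exp]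
    ring
  · rw [abs_of_nonneg (not_lt.1 h)] at *
    rw [Real.log_div k1 k2]; ring

lemma sqrt_quot (v : ℝ) (hv1 : -1 < v) (hv2 : v < 1) :
    Real.sqrt ((1 - v) / (1 + v)) = (1 / Real.sqrt (1 - v ^ 2)) * (1 - v) := by
  have h : 0 < 1 - v ^ 2 := by nlinarith
  have h1 : 0 < 1 - v := by linarith
  have h2 : 0 < 1 + v := by linarith
  have hs := Real.sqrt_pos.2 h
  rw [Real.sqrt_eq_iff_mul_self_eq (by positivity) (by positivity)]
  have : Real.sqrt (1 - v ^ 2) * Real.sqrt (1 - v ^ 2) = 1 - v ^ 2 := Real.mul_self_sqrt h.le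
  have e : (1 / Real.sqrt (1 - v ^ 2) * (1 - v)) * (1 / Real.sqrt (1 - v ^ 2) * (1 - v))
    = (1 - v) ^ 2 / (Real.sqrt (1 - v ^ 2) * Real.sqrt (1 - v ^ 2)) := by field_simp
  rw [e, this]
  rw [div_eq_div_iff (by positivity) (by positivity)]
  ring

theorem stmt11 (βL βR v E γ dp dm : ℝ) (hL : 0 < βL) (hR : 0 < βR)
    (hv1 : -1 < v) (hv2 : v < 1) (hv0 : v ≠ 0) (hE : E ≠ 0)
    (hγ : γ = 1 / Real.sqrt (1 - v ^ 2))
    (hdp : dp = γ * (1 + v)) (hdm : dm = γ * (1 - v)) :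
    (∫ s : ℝ, Complex.exp (-(Complex.I * E * s)) *
        (((1 / (4 * π * γ * v)) *
          ((1 / βR) * (fFun (βR / γ) s - fFun (βR * dm) s)
            - (1 / βL) * (fFun (βL / γ) s - fFun (βL * dp) s)) : ℝ) : ℂ))
      - (((E / (2 * π)) * (if E < 0 then 1 else 0) : ℝ) : ℂ)
      = ((Rfun βL (-v) E + Rfun βR v E : ℝ) : ℂ) := by
  have h : 0 < 1 - v ^ 2 := by nlinarith
  have hs := Real.sqrt_pos.2 h
  have hγ0 : 0 < γ := by rw [hγ]; positivity
  have hm0 : 0 < dm := by rw [hdm]; exact mul_pos hγ0 (by linarith)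
  have hp0 : 0 < dp := by rw [hdp]; exact mul_pos hγ0 (by linarith)
  have hsq : Real.sqrt (1 - v ^ 2) = 1 / γ := by rw [hγ]; simp
  have q1 : Real.sqrt ((1 - v) / (1 + v)) = dm := by rw [sqrt_quot v hv1 hv2, hdm, hγ]
  have q2 : Real.sqrt ((1 - -v) / (1 + -v)) = dp := by
    rw [sqrt_quot (-v) (by linarith) (by linarith), hdp, hγ, neg_sq, sub_neg_eq_add]
  have cR1 : 0 < βR / γ := by positivity
  have cR2 : 0 < βR * dm := by positivity
  have cL1 : 0 < βL / γ := by positivity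
  have cL2 : 0 < βL * dp := by positivity
  have hexp : ∀ (c d : ℝ), 0 < c → 0 < d → Integrable (fun s : ℝ =>
      Complex.exp (-(Complex.I * E * s)) * ((fFun c s - fFun d s : ℝ) : ℂ)) := by
    intro c d hc hd
    have hi := (fdiff_integrable c d hc hd).ofReal (𝕜 := ℂ)
    refine hi.norm.mono'
      ((by fun_prop : AEStronglyMeasurable (fun x : ℝ => Complex.exp (-(Complex.I * E * x))) _).mul
        hi.aestronglyMeasurable) (Filter.Eventually.of_forall fun x => ?_)
    rw [norm_mul, Complex.norm_exp]
    simp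
  have hI : (∫ s : ℝ, Complex.exp (-(Complex.I * E * s)) *
        (((1 / (4 * π * γ * v)) *
          ((1 / βR) * (fFun (βR / γ) s - fFun (βR * dm) s)
            - (1 / βL) * (fFun (βL / γ) s - fFun (βL * dp) s)) : ℝ) : ℂ))
      = ((1 / (4 * π * γ * v) * ((1 / βR) * (Lf (βR / γ) E - Lf (βR * dm) E)
          - (1 / βL) * (Lf (βL / γ) E - Lf (βL * dp) E)) : ℝ) : ℂ) := by
    rw [Complex.ofReal_mul, Complex.ofReal_sub, Complex.ofReal_mul (1 / βR), Complex.ofReal_mul (1 / βL),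
      ← key _ _ E cR1 cR2 hE, ← key _ _ E cL1 cL2 hE, ← integral_const_mul, ← integral_const_mul,
      ← integral_sub ((hexp _ _ cR1 cR2).const_mul _) ((hexp _ _ cL1 cL2).const_mul _),
      ← integral_const_mul]
    congr 1
    funext s
    push_cast
    ring
  rw [hI, ← Complex.ofReal_sub]
  congr 1
  unfold Rfun
  rw [q1, q2, neg_sq, hsq, mul_one_div, mul_one_div,
    log_quot _ _ E cR1 cR2 hE, log_quot _ _ E cL1 cL2 hE]
  have hdd : dp - dm = 2 * γ * v := by rw [hdp, hdm]; ring
  have hdp' : dp = dm + 2 * γ * v := by linarith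
  generalize (if E < 0 then (1:ℝ) else 0) = θ
  generalize Lf (βR / γ) E = A
  generalize Lf (βR * dm) E = B
  generalize Lf (βL / γ) E = C
  generalize Lf (βL * dp) E = D
  rw [hdp']
  have := Real.pi_ne_zero
  field_simp
  ring
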